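/- Independence of coded symbols in a decoding set of capacity achieving ULDCs (Lemma 3, Property 2(c)): let N ≥ 2, K ≥ 1, and consider a universal locally decodable code (ULDC) with locality N, K source symbols of entropy L_w > 0, M coded symbols of entropy L_x, and symbol rate L_w/L_x = C*(N,K). Then for every k ∈ {1,…,K}, every decoding set S ∈ 𝒮_k, and every pair of distinct indices i₁, i₂ ∈ S, one has H(X_{i₁} | X_{i₂}) = H(X_{i₁}); i.e., X_{i₁} and X_{i₂} are independent. -/

import Mathlib

open scoped BigOperators

noncomputable section

/-- A finite probability space: a finite type together with a probability mass function. -/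
structure FinProbSpace where
  Ω : Type
  [fin : Fintype Ω]
  p : Ω → ℝ
  nonneg : ∀ ω, 0 ≤ p ω
  sum_one : ∑ ω, p ω = 1

attribute [instance] FinProbSpace.fin

namespace FinProbSpace

variable (P : FinProbSpace)

/-- Probability that the random variable `X` takes the value `a`. -/
def prob {α : Type} [DecidableEq α] (X : P.Ω → α) (a : α) : ℝ :=
  ∑ ω, if X ω = a then P.p ω else 0

/-- Shannon entropy (in bits) of a finitely valued random variable. -/
def H {α : Type} [Fintype α] [DecidableEq α] (X : P.Ω → α) : ℝ :=
  ∑ a, -(P.prob X a * Real.logb 2 (P.prob X a))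

/-- Conditional Shannon entropy `H(X | Y) = H(X, Y) - H(Y)` (in bits). -/
def condH {α β : Type} [Fintype α] [DecidableEq α] [Fintype β] [DecidableEq β]
    (X : P.Ω → α) (Y : P.Ω → β) : ℝ :=
  P.H (fun ω => (X ω, Y ω)) - P.H Y

/-- The tuple random variable `(X_i)_{i ∈ ι}`. -/
def tuple {ι V : Type} (X : ι → P.Ω → V) : P.Ω → ι → V := fun ω i => X i ω

/-- Joint (mutual) independence of a finite family of random variables. -/
def iIndep {ι V : Type} [Fintype ι] [DecidableEq ι] [DecidableEq V] (X : ι → P.Ω → V) : Prop :=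
  ∀ a : ι → V, P.prob (P.tuple X) a = ∏ i, P.prob (X i) (a i)

/-- `X` and `Y` contain the same information about everything beyond `Z`:
`H(X | Y, Z) = H(Y | X, Z) = 0`. -/
def sameInfo {α β γ : Type} [Fintype α] [DecidableEq α] [Fintype β] [DecidableEq β]
    [Fintype γ] [DecidableEq γ] (X : P.Ω → α) (Y : P.Ω → β) (Z : P.Ω → γ) : Prop :=
  P.condH X (fun ω => (Y ω, Z ω)) = 0 ∧ P.condH Y (fun ω => (X ω, Z ω)) = 0

end FinProbSpace

/-- A locally decodable code with `K` source symbols of entropy `Lw`, `M` coded symbols of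
entropy `Lx`, and locality `N`. -/
structure LDC (K N M : ℕ) (Lw Lx : ℝ) where
  P : FinProbSpace
  V : Type
  [fV : Fintype V]
  [dV : DecidableEq V]
  V' : Type
  [fV' : Fintype V']
  [dV' : DecidableEq V']
  /-- the source symbols -/
  W : Fin K → P.Ω → V
  /-- the coded symbols -/
  X : Fin M → P.Ω → V'
  indep : P.iIndep W
  HW : ∀ k, P.H (W k) = Lw
  coded_fn : ∀ m, ∃ f : (Fin K → V) → V', ∀ ω, X m ω = f (fun k => W k ω)
  HX : ∀ m, P.H (X m) = Lx
  /-- the decoding supersets -/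
  decSets : Fin K → Finset (Finset (Fin M))
  decSets_nonempty : ∀ k, (decSets k).Nonempty
  decSets_card : ∀ k, ∀ s ∈ decSets k, s.card = N
  decodes : ∀ k, ∀ s ∈ decSets k,
    P.condH (W k) (P.tuple fun i : {x // x ∈ s} => X i.1) = 0

attribute [instance] LDC.fV LDC.dV LDC.fV' LDC.dV'

/-- A universal LDC: every coded symbol appears in some decoding set of every source symbol. -/
def LDC.IsUniversal {K N M : ℕ} {Lw Lx : ℝ} (C : LDC K N M Lw Lx) : Prop :=
  ∀ (m : Fin M) (k : Fin K), ∃ s ∈ C.decSets k, m ∈ s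

/-- A perfectly smooth LDC: for each source symbol, every coded symbol lies in the same
number of decoding sets. -/
def LDC.IsSmooth {K N M : ℕ} {Lw Lx : ℝ} (C : LDC K N M Lw Lx) : Prop :=
  ∀ (k : Fin K) (m m' : Fin M),
    ((C.decSets k).filter (fun s => m ∈ s)).card =
      ((C.decSets k).filter (fun s => m' ∈ s)).card

/-- `C*(N, K) = N (1 + 1/N + ⋯ + 1/N^{K-1})⁻¹`. -/
def Cstar (N K : ℕ) : ℝ := N / (∑ j ∈ Finset.range K, (1 / (N : ℝ)) ^ j)

/-- An `N`-query information retrieval scheme with `K` messages of entropy `Lw` and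
answer sets of sizes `Mn n` with answers of entropy `Lx`. -/
structure IRScheme (K N : ℕ) (Mn : Fin N → ℕ) (Lw Lx : ℝ) where
  P : FinProbSpace
  V : Type
  [fV : Fintype V]
  [dV : DecidableEq V]
  V' : Type
  [fV' : Fintype V']
  [dV' : DecidableEq V']
  /-- the messages -/
  W : Fin K → P.Ω → V
  /-- `A n m` is the `m`-th possible answer of database `n` -/
  A : (n : Fin N) → Fin (Mn n) → P.Ω → V'
  indep : P.iIndep W
  HW : ∀ k, P.H (W k) = Lw
  ans_fn : ∀ n m, ∃ f : (Fin K → V) → V', ∀ ω, A n m ω = f (fun k => W k ω)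
  HA : ∀ n m, P.H (A n m) = Lx
  /-- the decoding supersets: each decoding set consists of one answer index per database -/
  Q : Fin K → Finset ((n : Fin N) → Fin (Mn n))
  Q_nonempty : ∀ k, (Q k).Nonempty
  decodes : ∀ k, ∀ q ∈ Q k, P.condH (W k) (P.tuple fun n => A n (q n)) = 0

attribute [instance] IRScheme.fV IRScheme.dV IRScheme.fV' IRScheme.dV'

/-- A repudiative (RIR_max) scheme: every possible answer of every database appears in some
decoding set of every message. -/
def IRScheme.IsRIR {K N : ℕ} {Mn : Fin N → ℕ} {Lw Lx : ℝ} (C : IRScheme K N Mn Lw Lx) : Prop :=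
  ∀ (n : Fin N) (m : Fin (Mn n)) (k : Fin K), ∃ q ∈ C.Q k, q n = m

/-- A perfectly private (PIR_max) scheme: for each message there is a distribution on its
decoding sets such that the marginal distribution of the query to each database does not
depend on the message. -/
def IRScheme.IsPIR {K N : ℕ} {Mn : Fin N → ℕ} {Lw Lx : ℝ} (C : IRScheme K N Mn Lw Lx) : Prop :=
  ∃ μ : Fin K → ((n : Fin N) → Fin (Mn n)) → ℝ,
    (∀ k q, 0 ≤ μ k q) ∧ (∀ k, ∑ q ∈ C.Q k, μ k q = 1) ∧
    (∀ (k k' : Fin K) (n : Fin N) (m : Fin (Mn n)),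
      ∑ q ∈ (C.Q k).filter (fun q => q n = m), μ k q =
        ∑ q ∈ (C.Q k').filter (fun q => q n = m), μ k' q)

/-- `C_K(N) = (1 + 1/N + ⋯ + 1/N^{K-1})⁻¹`, the capacity of PIR. -/
def CK (N K : ℕ) : ℝ := (∑ j ∈ Finset.range K, (1 / (N : ℝ)) ^ j)⁻¹

/-!
Let `u n = L_w / C*(N, n)`, so that `u 0 = 0` and `N * u (n + 1) = L_w + u n`. Revealing a fresh
source symbol `W_k` lowers the conditional entropy of a decoding set of `W_k` by exactly `L_w`, so
for every coded symbol `X_m` of such a set `S`,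
`L_w + H(X_m | W_A, W_k) ≤ H(X_S | W_A) ≤ ∑ i ∈ S, H(X_i | W_A)`.
Universality provides such an `S` for all `m` and `k`. At capacity `H(X_m) = u K`; propagating this
inequality upwards in `A` gives `H(X_m | W_A) ≤ u n` whenever `n` source symbols lie outside `A`,
and propagating it back down from `u 0 = 0` gives the reverse inequality. Taking `A = ∅`, the
symbols of a decoding set satisfy `H(X_S) ≥ L_w + u (K - 1) = N * u K = ∑ i ∈ S, H(X_i)`, which
forces them to be independent.
-/

theorem sum_mul_logb_le_sum_mul_logb {ι : Type*} {s : Finset ι} {p q : ι → ℝ} {b : ℝ} (hb : 1 < b)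
    (hp : ∀ i ∈ s, 0 ≤ p i) (hq : ∀ i ∈ s, 0 ≤ q i) (hpq : ∀ i ∈ s, q i = 0 → p i = 0)
    (hsum : ∑ i ∈ s, q i ≤ ∑ i ∈ s, p i) :
    ∑ i ∈ s, p i * Real.logb b (q i) ≤ ∑ i ∈ s, p i * Real.logb b (p i) := by
  have hlog : 0 < Real.log b := Real.log_pos hb
  have hterm : ∀ i ∈ s, p i * Real.log (q i) - p i * Real.log (p i) ≤ q i - p i := by
    intro i hi
    rcases (hp i hi).eq_or_lt with hpi | hpi
    · simpa [← hpi] using hq i hi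
    have hqi : 0 < q i := (hq i hi).lt_of_ne' fun h => hpi.ne' (hpq i hi h)
    calc p i * Real.log (q i) - p i * Real.log (p i) = p i * Real.log (q i / p i) := by
          rw [Real.log_div hqi.ne' hpi.ne', mul_sub]
      _ ≤ p i * (q i / p i - 1) :=
          mul_le_mul_of_nonneg_left (Real.log_le_sub_one_of_pos (div_pos hqi hpi)) hpi.le
      _ = q i - p i := by field_simp
  have hsum_terms := Finset.sum_le_sum hterm
  simp only [Finset.sum_sub_distrib] at hsum_terms
  simp only [Real.logb, ← mul_div_assoc, ← Finset.sum_div]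
  exact div_le_div_of_nonneg_right (by linarith) hlog.le

namespace FinProbSpace

variable (P : FinProbSpace)

section Prob

variable {α β : Type} [DecidableEq α] [DecidableEq β]

theorem prob_nonneg (X : P.Ω → α) (a : α) : 0 ≤ P.prob X a :=
  Finset.sum_nonneg fun ω _ => ite_nonneg (P.nonneg ω) le_rfl

theorem prob_le_prob_of_factorsThrough {X : P.Ω → α} {Y : P.Ω → β} (h : X.FactorsThrough Y)
    (ω : P.Ω) : P.prob Y (Y ω) ≤ P.prob X (X ω) := by
  refine Finset.sum_le_sum fun ω' _ => ?_
  by_cases hY : Y ω' = Y ω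
  · simp [hY, h hY]
  · simpa [hY] using ite_nonneg (P.nonneg ω') le_rfl

theorem prob_apply_pos (X : P.Ω → α) {ω : P.Ω} (hω : 0 < P.p ω) : 0 < P.prob X (X ω) :=
  Finset.sum_pos' (fun ω' _ => ite_nonneg (P.nonneg ω') le_rfl)
    ⟨ω, Finset.mem_univ ω, by simpa using hω⟩

theorem prob_of_subsingleton [Subsingleton α] (X : P.Ω → α) (a : α) : P.prob X a = 1 := by
  simp [prob, Subsingleton.elim _ a, P.sum_one]

theorem sum_prob_mul [Fintype α] (X : P.Ω → α) (g : α → ℝ) :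
    ∑ a, P.prob X a * g a = ∑ ω, P.p ω * g (X ω) := by
  simp only [prob, Finset.sum_mul]
  rw [Finset.sum_comm]
  simp

theorem sum_prob [Fintype α] (X : P.Ω → α) : ∑ a, P.prob X a = 1 := by
  simpa [P.sum_one] using P.sum_prob_mul X fun _ => 1

theorem sum_prob_prodMk [Fintype α] (X : P.Ω → α) (Y : P.Ω → β) (b : β) :
    ∑ a, P.prob (fun ω => (X ω, Y ω)) (a, b) = P.prob Y b := by
  simp only [prob, Prod.mk.injEq]
  rw [Finset.sum_comm]
  refine Finset.sum_congr rfl fun ω _ => ?_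
  by_cases h : Y ω = b <;> simp [h]

end Prob

section Entropy

variable {α β γ : Type} [Fintype α] [DecidableEq α] [Fintype β] [DecidableEq β]
  [Fintype γ] [DecidableEq γ]

theorem H_eq_sum_p_mul (X : P.Ω → α) :
    P.H X = ∑ ω, P.p ω * -Real.logb 2 (P.prob X (X ω)) := by
  simpa [H] using P.sum_prob_mul X fun a => -Real.logb 2 (P.prob X a)

theorem H_le_of_factorsThrough {X : P.Ω → α} {Y : P.Ω → β} (h : X.FactorsThrough Y) :
    P.H X ≤ P.H Y := by
  simp only [H_eq_sum_p_mul]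
  refine Finset.sum_le_sum fun ω _ => ?_
  rcases (P.nonneg ω).eq_or_lt with hω | hω
  · simp [← hω]
  · exact mul_le_mul_of_nonneg_left (neg_le_neg (Real.logb_le_logb_of_le one_lt_two
      (P.prob_apply_pos Y hω) (P.prob_le_prob_of_factorsThrough h ω))) hω.le

theorem H_congr {X : P.Ω → α} {Y : P.Ω → β} (h : ∀ ω ω', X ω = X ω' ↔ Y ω = Y ω') :
    P.H X = P.H Y :=
  le_antisymm (P.H_le_of_factorsThrough fun ω ω' => (h ω ω').2)
    (P.H_le_of_factorsThrough fun ω ω' => (h ω ω').1)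

theorem H_of_subsingleton [Subsingleton α] (X : P.Ω → α) : P.H X = 0 := by
  simp [H, prob_of_subsingleton]

theorem H_le_sum_p_mul_neg_logb (X : P.Ω → α) {q : α → ℝ} (hq : ∀ a, 0 ≤ q a)
    (hXq : ∀ ω, 0 < P.p ω → 0 < q (X ω)) (hsum : ∑ a, q a ≤ 1) :
    P.H X ≤ ∑ ω, P.p ω * -Real.logb 2 (q (X ω)) := by
  have hzero : ∀ a, q a = 0 → P.prob X a = 0 := fun a ha => Finset.sum_eq_zero fun ω _ =>
    ite_eq_right_iff.2 fun hω => by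
      contrapose! ha
      exact hω ▸ (hXq ω ((P.nonneg ω).lt_of_ne' ha)).ne'
  have hgibbs : ∑ a, P.prob X a * Real.logb 2 (q a) ≤
      ∑ a, P.prob X a * Real.logb 2 (P.prob X a) :=
    sum_mul_logb_le_sum_mul_logb one_lt_two (fun a _ => P.prob_nonneg X a) (fun a _ => hq a)
      (fun a _ => hzero a) (hsum.trans_eq (P.sum_prob X).symm)
  rw [← P.sum_prob_mul X fun a => -Real.logb 2 (q a)]
  simpa [H] using hgibbs

theorem sum_prob_mul_prob_div_prob (X : P.Ω → α) (Y : P.Ω → β) (Z : P.Ω → γ) :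
    ∑ t : α × β × γ, P.prob (fun ω => (X ω, Z ω)) (t.1, t.2.2) *
      P.prob (fun ω => (Y ω, Z ω)) t.2 / P.prob Z t.2.2 = 1 := by
  calc _ = ∑ c, (∑ a, P.prob (fun ω => (X ω, Z ω)) (a, c)) *
        (∑ b, P.prob (fun ω => (Y ω, Z ω)) (b, c)) / P.prob Z c := by
        simp only [Fintype.sum_prod_type, Finset.sum_mul_sum, Finset.sum_div]
        rw [Finset.sum_congr rfl fun a _ => Finset.sum_comm, Finset.sum_comm]
    _ = ∑ c, P.prob Z c := by simp only [sum_prob_prodMk, mul_self_div_self]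
    _ = 1 := P.sum_prob Z

theorem H_submodular (X : P.Ω → α) (Y : P.Ω → β) (Z : P.Ω → γ) :
    P.H (fun ω => (X ω, Y ω, Z ω)) + P.H Z ≤
      P.H (fun ω => (X ω, Z ω)) + P.H (fun ω => (Y ω, Z ω)) := by
  -- Gibbs' inequality against the law making `X` and `Y` conditionally independent given `Z`
  let q : α × β × γ → ℝ := fun t => P.prob (fun ω => (X ω, Z ω)) (t.1, t.2.2) *
    P.prob (fun ω => (Y ω, Z ω)) t.2 / P.prob Z t.2.2
  have hpos : ∀ ω, 0 < P.p ω → 0 < q (X ω, Y ω, Z ω) := fun ω hω =>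
    div_pos (mul_pos (P.prob_apply_pos (fun ω => (X ω, Z ω)) hω)
      (P.prob_apply_pos (fun ω => (Y ω, Z ω)) hω)) (P.prob_apply_pos Z hω)
  have hlogb : ∀ ω, P.p ω * -Real.logb 2 (q (X ω, Y ω, Z ω)) =
      P.p ω * -Real.logb 2 (P.prob (fun ω => (X ω, Z ω)) (X ω, Z ω)) +
      P.p ω * -Real.logb 2 (P.prob (fun ω => (Y ω, Z ω)) (Y ω, Z ω)) -
      P.p ω * -Real.logb 2 (P.prob Z (Z ω)) := by
    intro ω
    rcases (P.nonneg ω).eq_or_lt with hω | hω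
    · simp [← hω]
    have hXZ := P.prob_apply_pos (fun ω => (X ω, Z ω)) hω
    have hYZ := P.prob_apply_pos (fun ω => (Y ω, Z ω)) hω
    rw [Real.logb_div (mul_pos hXZ hYZ).ne' (P.prob_apply_pos Z hω).ne',
      Real.logb_mul hXZ.ne' hYZ.ne']
    ring
  rw [← le_sub_iff_add_le]
  calc P.H (fun ω => (X ω, Y ω, Z ω)) ≤ ∑ ω, P.p ω * -Real.logb 2 (q (X ω, Y ω, Z ω)) :=
        P.H_le_sum_p_mul_neg_logb _ (fun t => div_nonneg (mul_nonneg (P.prob_nonneg _ _)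
          (P.prob_nonneg _ _)) (P.prob_nonneg _ _)) hpos (P.sum_prob_mul_prob_div_prob X Y Z).le
    _ = P.H (fun ω => (X ω, Z ω)) + P.H (fun ω => (Y ω, Z ω)) - P.H Z := by
        simp only [hlogb, Finset.sum_sub_distrib, Finset.sum_add_distrib, ← H_eq_sum_p_mul]

theorem H_tuple_of_iIndep {ι V : Type} [Fintype ι] [DecidableEq ι] [Fintype V] [DecidableEq V]
    {X : ι → P.Ω → V} (hX : P.iIndep X) : P.H (P.tuple X) = ∑ i, P.H (X i) := by
  simp only [H_eq_sum_p_mul]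
  rw [Finset.sum_comm]
  refine Finset.sum_congr rfl fun ω _ => ?_
  rcases (P.nonneg ω).eq_or_lt with hω | hω
  · simp [← hω]
  · rw [hX, ← Finset.mul_sum, Finset.sum_neg_distrib,
      ← Real.logb_prod _ _ fun i _ => (P.prob_apply_pos (X i) hω).ne']
    rfl

theorem condH_nonneg (X : P.Ω → α) (Y : P.Ω → β) : 0 ≤ P.condH X Y :=
  sub_nonneg.2 (P.H_le_of_factorsThrough fun _ _ h => congrArg Prod.snd h)

theorem condH_of_subsingleton [Subsingleton β] (X : P.Ω → α) (Y : P.Ω → β) :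
    P.condH X Y = P.H X := by
  rw [condH, P.H_of_subsingleton Y, sub_zero]
  exact P.H_congr fun ω ω' => by simp [Subsingleton.elim (Y ω) (Y ω')]

theorem condH_le_of_factorsThrough_left {X : P.Ω → α} {Y : P.Ω → β} (h : X.FactorsThrough Y)
    (Z : P.Ω → γ) : P.condH X Z ≤ P.condH Y Z :=
  sub_le_sub_right (P.H_le_of_factorsThrough fun ω ω' => by
    simpa only [Prod.mk.injEq] using And.imp_left (@h ω ω')) _

theorem condH_le_of_factorsThrough_right (X : P.Ω → α) {Y : P.Ω → β} {Z : P.Ω → γ}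
    (h : Z.FactorsThrough Y) : P.condH X Y ≤ P.condH X Z := by
  have hsub := P.H_submodular X Y Z
  have hXY : P.H (fun ω => (X ω, Y ω, Z ω)) = P.H fun ω => (X ω, Y ω) :=
    P.H_congr fun ω ω' => by simpa using fun _ hY => h hY
  have hY : P.H (fun ω => (Y ω, Z ω)) = P.H Y := P.H_congr fun ω ω' => by simpa using @h ω ω'
  unfold condH
  linarith

theorem condH_le_H (X : P.Ω → α) (Y : P.Ω → β) : P.condH X Y ≤ P.H X :=
  (P.condH_le_of_factorsThrough_right X (Z := fun _ => ()) fun _ _ _ => rfl).trans_eq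
    (P.condH_of_subsingleton X _)

theorem condH_prodMk_le_add (X : P.Ω → α) (Y : P.Ω → β) (Z : P.Ω → γ) :
    P.condH (fun ω => (X ω, Y ω)) Z ≤ P.condH X Z + P.condH Y Z := by
  have hsub := P.H_submodular X Y Z
  have hassoc : P.H (fun ω => ((X ω, Y ω), Z ω)) = P.H fun ω => (X ω, Y ω, Z ω) :=
    P.H_congr fun ω ω' => by simp [and_assoc]
  unfold condH
  linarith

theorem condH_eq_add_of_condH_eq_zero {X : P.Ω → α} {Y : P.Ω → β} (h : P.condH Y X = 0)
    (Z : P.Ω → γ) : P.condH X Z = P.condH Y Z + P.condH X (fun ω => (Y ω, Z ω)) := by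
  have hYXZ : P.condH Y (fun ω => (X ω, Z ω)) = 0 :=
    le_antisymm ((P.condH_le_of_factorsThrough_right Y fun _ _ h => congrArg Prod.fst h).trans_eq h)
      (P.condH_nonneg _ _)
  have hcomm : P.H (fun ω => (Y ω, X ω, Z ω)) = P.H fun ω => (X ω, Y ω, Z ω) :=
    P.H_congr fun ω ω' => by simp [and_left_comm]
  unfold condH at *
  linarith

end Entropy

section Restrict

variable {ι V : Type}

/-- The subtuple `X_s = (X_i)_{i ∈ s}` of a family of random variables, used for the coded symbols
of a decoding set and for the revealed source symbols. It is indexed by the subtype `{i // i ∈ s}`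
so that `LDC.decodes` is about `restrict` by definition. -/
def restrict (X : ι → P.Ω → V) (s : Finset ι) : P.Ω → {i // i ∈ s} → V :=
  P.tuple fun i : {i // i ∈ s} => X i.1

theorem restrict_eq_restrict_iff (X : ι → P.Ω → V) (s : Finset ι) (ω ω' : P.Ω) :
    P.restrict X s ω = P.restrict X s ω' ↔ ∀ i ∈ s, X i ω = X i ω' := by
  simp [restrict, tuple, funext_iff]

theorem factorsThrough_restrict (X : ι → P.Ω → V) {s : Finset ι} {i : ι} (hi : i ∈ s) :
    (X i).FactorsThrough (P.restrict X s) := fun ω ω' h =>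
  (P.restrict_eq_restrict_iff X s ω ω').1 h i hi

theorem restrict_factorsThrough_restrict (X : ι → P.Ω → V) {s t : Finset ι} (hst : s ⊆ t) :
    (P.restrict X s).FactorsThrough (P.restrict X t) := fun ω ω' h =>
  (P.restrict_eq_restrict_iff X s ω ω').2 fun _ hi => P.factorsThrough_restrict X (hst hi) h

variable [DecidableEq ι]

theorem restrict_insert_eq_iff (X : ι → P.Ω → V) (i : ι) (s : Finset ι) (ω ω' : P.Ω) :
    P.restrict X (insert i s) ω = P.restrict X (insert i s) ω' ↔
      (X i ω, P.restrict X s ω) = (X i ω', P.restrict X s ω') := by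
  simp [restrict_eq_restrict_iff]

variable [Fintype V] [DecidableEq V]

theorem condH_restrict_le_sum {β : Type} [Fintype β] [DecidableEq β] (X : ι → P.Ω → V)
    (Z : P.Ω → β) (s : Finset ι) : P.condH (P.restrict X s) Z ≤ ∑ i ∈ s, P.condH (X i) Z := by
  induction s using Finset.induction_on with
  | empty => exact (P.condH_le_H _ Z).trans_eq (P.H_of_subsingleton _)
  | insert i s hi ih =>
    calc P.condH (P.restrict X (insert i s)) Z
        ≤ P.condH (fun ω => (X i ω, P.restrict X s ω)) Z :=
          P.condH_le_of_factorsThrough_left (fun ω ω' => (P.restrict_insert_eq_iff X i s ω ω').2) Z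
      _ ≤ P.condH (X i) Z + P.condH (P.restrict X s) Z := P.condH_prodMk_le_add _ _ Z
      _ ≤ ∑ i ∈ insert i s, P.condH (X i) Z := by rw [Finset.sum_insert hi]; gcongr

theorem H_restrict_le_sum (X : ι → P.Ω → V) (s : Finset ι) :
    P.H (P.restrict X s) ≤ ∑ i ∈ s, P.H (X i) := by
  simpa only [condH_of_subsingleton] using P.condH_restrict_le_sum X (fun _ => ()) s

theorem condH_eq_H_of_H_restrict_eq_sum {β : Type} [Fintype β] [DecidableEq β]
    {X : ι → P.Ω → V} {s : Finset ι} (hs : P.H (P.restrict X s) = ∑ i ∈ s, P.H (X i)) {i : ι}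
    (hi : i ∈ s) {Z : P.Ω → β} (hZ : Z.FactorsThrough (P.restrict X (s.erase i))) :
    P.condH (X i) Z = P.H (X i) := by
  refine le_antisymm (P.condH_le_H _ Z) ?_
  have hsplit : P.H (P.restrict X s) =
      P.condH (X i) (P.restrict X (s.erase i)) + P.H (P.restrict X (s.erase i)) := by
    rw [condH, sub_add_cancel]
    refine P.H_congr fun ω ω' => ?_
    rw [← restrict_insert_eq_iff, Finset.insert_erase hi]
  have hsub := P.H_restrict_le_sum X (s.erase i)
  have hsum := Finset.add_sum_erase s (fun i => P.H (X i)) hi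
  have hmono := P.condH_le_of_factorsThrough_right (X i) hZ
  linarith

theorem condH_restrict_eq_H_of_iIndep [Fintype ι] {X : ι → P.Ω → V} (hX : P.iIndep X) {i : ι}
    {s : Finset ι} (hi : i ∉ s) : P.condH (X i) (P.restrict X s) = P.H (X i) := by
  have huniv : P.H (P.restrict X Finset.univ) = ∑ i, P.H (X i) := by
    rw [← P.H_tuple_of_iIndep hX]
    exact P.H_congr fun ω ω' => by
      rw [restrict_eq_restrict_iff]
      simp [tuple, funext_iff]
  exact P.condH_eq_H_of_H_restrict_eq_sum huniv (Finset.mem_univ i)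
    (P.restrict_factorsThrough_restrict X fun _ hj =>
      Finset.mem_erase_of_ne_of_mem (ne_of_mem_of_not_mem hj hi) (Finset.mem_univ _))

end Restrict

end FinProbSpace

theorem natCast_mul_div_Cstar_succ {N : ℕ} (hN : N ≠ 0) (L : ℝ) (n : ℕ) :
    N * (L / Cstar N (n + 1)) = L + L / Cstar N n := by
  have hN' : (N : ℝ) ≠ 0 := Nat.cast_ne_zero.2 hN
  have hgeom : ∑ j ∈ Finset.range (n + 1), (1 / (N : ℝ)) ^ j =
      1 / N * ∑ j ∈ Finset.range n, (1 / (N : ℝ)) ^ j + 1 := by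
    simp only [Finset.sum_range_succ', pow_succ', Finset.mul_sum, pow_zero]
  simp only [Cstar, div_div_eq_mul_div, hgeom]
  field_simp
  ring

theorem natCast_mul_div_Cstar_card_compl {ι : Type*} [Fintype ι] [DecidableEq ι] {N : ℕ}
    (hN : N ≠ 0) (L : ℝ) {k : ι} {A : Finset ι} (hk : k ∉ A) :
    N * (L / Cstar N Aᶜ.card) = L + L / Cstar N (insert k A)ᶜ.card := by
  rw [Finset.compl_insert, ← natCast_mul_div_Cstar_succ hN,
    Finset.card_erase_add_one (Finset.mem_compl.2 hk)]

namespace LDC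

variable {K N M : ℕ} {Lw Lx : ℝ} (C : LDC K N M Lw Lx)

theorem sum_const_of_mem_decSets {k : Fin K} {S : Finset (Fin M)} (hS : S ∈ C.decSets k) (c : ℝ) :
    ∑ _i ∈ S, c = N * c := by
  rw [Finset.sum_const, nsmul_eq_mul, C.decSets_card k S hS]

theorem condH_restrict_X_eq_add {k : Fin K} {S : Finset (Fin M)} (hS : S ∈ C.decSets k)
    {A : Finset (Fin K)} (hk : k ∉ A) :
    C.P.condH (C.P.restrict C.X S) (C.P.restrict C.W A) =
      Lw + C.P.condH (C.P.restrict C.X S) (C.P.restrict C.W (insert k A)) := by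
  have hdec : C.P.condH (C.W k) (C.P.restrict C.X S) = 0 := C.decodes k S hS
  rw [C.P.condH_eq_add_of_condH_eq_zero hdec, C.P.condH_restrict_eq_H_of_iIndep C.indep hk, C.HW]
  congr 1
  exact le_antisymm
    (C.P.condH_le_of_factorsThrough_right _ fun ω ω' =>
      (C.P.restrict_insert_eq_iff C.W k A ω ω').2)
    (C.P.condH_le_of_factorsThrough_right _ fun ω ω' =>
      (C.P.restrict_insert_eq_iff C.W k A ω ω').1)

theorem add_condH_X_le_condH_restrict_X {k : Fin K} {S : Finset (Fin M)} (hS : S ∈ C.decSets k)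
    {m : Fin M} (hm : m ∈ S) {A : Finset (Fin K)} (hk : k ∉ A) :
    Lw + C.P.condH (C.X m) (C.P.restrict C.W (insert k A)) ≤
      C.P.condH (C.P.restrict C.X S) (C.P.restrict C.W A) := by
  rw [C.condH_restrict_X_eq_add hS hk]
  gcongr
  exact C.P.condH_le_of_factorsThrough_left (C.P.factorsThrough_restrict C.X hm) _

variable {C}

namespace IsUniversal

theorem condH_X_le (hU : C.IsUniversal) (hN : N ≠ 0) (hLx : Lx ≤ Lw / Cstar N K)
    (A : Finset (Fin K)) (m : Fin M) :
    C.P.condH (C.X m) (C.P.restrict C.W A) ≤ Lw / Cstar N Aᶜ.card := by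
  induction A using Finset.induction_on generalizing m with
  | empty =>
    calc C.P.condH (C.X m) (C.P.restrict C.W ∅) ≤ C.P.H (C.X m) := C.P.condH_le_H _ _
      _ = Lx := C.HX m
      _ ≤ Lw / Cstar N (∅ : Finset (Fin K))ᶜ.card := by simpa using hLx
  | insert k A hk ih =>
    obtain ⟨S, hS, hm⟩ := hU m k
    have hbound : Lw + C.P.condH (C.X m) (C.P.restrict C.W (insert k A)) ≤
        Lw + Lw / Cstar N (insert k A)ᶜ.card :=
      calc _ ≤ C.P.condH (C.P.restrict C.X S) (C.P.restrict C.W A) :=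
            C.add_condH_X_le_condH_restrict_X hS hm hk
        _ ≤ ∑ i ∈ S, C.P.condH (C.X i) (C.P.restrict C.W A) := C.P.condH_restrict_le_sum _ _ S
        _ ≤ ∑ _i ∈ S, Lw / Cstar N Aᶜ.card := Finset.sum_le_sum fun i _ => ih i
        _ = N * (Lw / Cstar N Aᶜ.card) := C.sum_const_of_mem_decSets hS _
        _ = Lw + Lw / Cstar N (insert k A)ᶜ.card := natCast_mul_div_Cstar_card_compl hN Lw hk
    exact le_of_add_le_add_left hbound

theorem le_condH_X (hU : C.IsUniversal) (hN : N ≠ 0) (hLx : Lx ≤ Lw / Cstar N K)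
    (A : Finset (Fin K)) (m : Fin M) :
    Lw / Cstar N Aᶜ.card ≤ C.P.condH (C.X m) (C.P.restrict C.W A) := by
  induction hn : Aᶜ.card generalizing A m with
  | zero =>
    -- `Cstar N 0 = N / 0 = 0`, so the bound is `Lw / 0 = 0`
    simpa [Cstar] using C.P.condH_nonneg (C.X m) (C.P.restrict C.W A)
  | succ n ih =>
    obtain ⟨k, hk⟩ : Aᶜ.Nonempty := Finset.card_pos.1 (by lia)
    obtain ⟨S, hS, hm⟩ := hU m k
    have hn' : (insert k A)ᶜ.card = n := by
      rw [Finset.compl_insert, Finset.card_erase_of_mem hk, hn, Nat.add_sub_cancel]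
    rw [Finset.mem_compl] at hk
    have hsum : N * (Lw / Cstar N (n + 1)) ≤ ∑ i ∈ S, C.P.condH (C.X i) (C.P.restrict C.W A) :=
      calc N * (Lw / Cstar N (n + 1)) = Lw + Lw / Cstar N n := natCast_mul_div_Cstar_succ hN Lw n
        _ ≤ Lw + C.P.condH (C.X m) (C.P.restrict C.W (insert k A)) := by gcongr; exact ih _ m hn'
        _ ≤ C.P.condH (C.P.restrict C.X S) (C.P.restrict C.W A) :=
            C.add_condH_X_le_condH_restrict_X hS hm hk
        _ ≤ _ := C.P.condH_restrict_le_sum _ _ S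
    have hle : ∀ i ∈ S, C.P.condH (C.X i) (C.P.restrict C.W A) ≤ Lw / Cstar N (n + 1) :=
      fun i _ => hn ▸ hU.condH_X_le hN hLx A i
    rw [← C.sum_const_of_mem_decSets hS] at hsum
    exact ((Finset.sum_eq_sum_iff_of_le hle).1 ((Finset.sum_le_sum hle).antisymm hsum) m hm).ge

theorem condH_restrict_X_eq_sum (hU : C.IsUniversal) (hN : N ≠ 0) (hLx : Lx ≤ Lw / Cstar N K)
    {k : Fin K} {S : Finset (Fin M)} (hS : S ∈ C.decSets k) {A : Finset (Fin K)} (hk : k ∉ A) :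
    C.P.condH (C.P.restrict C.X S) (C.P.restrict C.W A) =
      ∑ i ∈ S, C.P.condH (C.X i) (C.P.restrict C.W A) := by
  refine le_antisymm (C.P.condH_restrict_le_sum C.X _ S) ?_
  obtain ⟨m, hm⟩ : S.Nonempty := Finset.card_ne_zero.1 (by rwa [C.decSets_card k S hS])
  calc ∑ i ∈ S, C.P.condH (C.X i) (C.P.restrict C.W A) ≤ ∑ _i ∈ S, Lw / Cstar N Aᶜ.card :=
        Finset.sum_le_sum fun i _ => hU.condH_X_le hN hLx A i
    _ = N * (Lw / Cstar N Aᶜ.card) := C.sum_const_of_mem_decSets hS _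
    _ = Lw + Lw / Cstar N (insert k A)ᶜ.card := natCast_mul_div_Cstar_card_compl hN Lw hk
    _ ≤ Lw + C.P.condH (C.X m) (C.P.restrict C.W (insert k A)) := by
        gcongr; exact hU.le_condH_X hN hLx _ m
    _ ≤ C.P.condH (C.P.restrict C.X S) (C.P.restrict C.W A) :=
        C.add_condH_X_le_condH_restrict_X hS hm hk

theorem H_restrict_X_eq_sum (hU : C.IsUniversal) (hN : N ≠ 0) (hLx : Lx ≤ Lw / Cstar N K)
    {k : Fin K} {S : Finset (Fin M)} (hS : S ∈ C.decSets k) :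
    C.P.H (C.P.restrict C.X S) = ∑ i ∈ S, C.P.H (C.X i) := by
  simpa only [FinProbSpace.condH_of_subsingleton] using
    hU.condH_restrict_X_eq_sum hN hLx hS (Finset.notMem_empty k)

end IsUniversal

end LDC

/-- Independence of coded symbols in a decoding set, Lemma 3,
Property 2(c): in a capacity achieving ULDC, for every decoding set `S ∈ 𝒮_k` and distinct
`i₁, i₂ ∈ S`, `H(X_{i₁} | X_{i₂}) = H(X_{i₁})`. -/
theorem uldc_indep_coded_symbols (K N M : ℕ) (hK : 1 ≤ K) (hN : 2 ≤ N) (Lw Lx : ℝ)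
    (hLw : 0 < Lw) (C : LDC K N M Lw Lx) (hU : C.IsUniversal)
    (hcap : Lw / Lx = Cstar N K)
    (k : Fin K) (S : Finset (Fin M)) (hS : S ∈ C.decSets k)
    (i₁ i₂ : Fin M) (h₁ : i₁ ∈ S) (h₂ : i₂ ∈ S) (hne : i₁ ≠ i₂) :
    C.P.condH (C.X i₁) (C.X i₂) = C.P.H (C.X i₁) := by
  have hLx : Lx ≤ Lw / Cstar N K := by rw [← hcap, div_div_cancel₀ hLw.ne']
  exact C.P.condH_eq_H_of_H_restrict_eq_sum (hU.H_restrict_X_eq_sum (by lia) hLx hS) h₁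
    (C.P.factorsThrough_restrict C.X (Finset.mem_erase_of_ne_of_mem hne.symm h₂))
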